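/- Define t_k(N) = [Γ(N−k+1)·Γ((N+k)/2 + 1)] / [Γ(N+1)·Γ((N−k)/2 + 1)] for natural numbers 0 ≤ k ≤ N, where Γ is the real Gamma function, and let ā(N) = (2/(N(N+2)))·∑_{k=0}^{N} t_k(N). Then lim_{N→∞} N²·ā(N) = 6; in particular ā(N) = O(1/N²). -/

import Mathlib

open Filter

/-!
Write `t_k = gammaTerm N k`. Since `2 N² / (N (N + 2)) → 2`, the claim is that `∑_{k ≤ N} t_k → 3`.

The functional equation of `Γ` gives the two-step recurrence
`4 (N - k - 1) t_{k+2} = (N + k + 2) t_k` (`gammaTerm_rec`), with `t_0 = t_N = 1` and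
`t_1 = (N + 1) / (2 N)`. Hence `t_k → 2^{-k}` for every fixed `k`, which accounts for `2` in the
limit; `t_N = 1` accounts for the remaining `1`. The terms `t_{N-1}`, `t_{N-2}`, `t_{N-3}` tend
to `0`, the first one by a Wallis-type estimate (`gammaTerm_top_one`).

For the terms with `k ≤ N - 4` Tannery's theorem applies, with a summable majorant independent of
`N`. The ratio `t_{k+2} / t_k` is at most `3/4` for `k` up to about `N/2` and at most `1` up to
about `3N/5`, so `t_k` is dominated by a geometric sequence there (`gammaTerm_low`). Beyond
`3N/5` the ratio is at least `1`, so `t_k ≤ max (t_{N-4}) (t_{N-5}) = O(1/N²)`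
(`gammaTerm_high`), and this is `O(1/(k+1)²)`.
-/

/-- `t_k(N) = Γ(N−k+1)·Γ((N+k)/2+1) / (Γ(N+1)·Γ((N−k)/2+1))` for `0 ≤ k ≤ N`. -/
noncomputable def gammaTerm (N k : ℕ) : ℝ :=
  (Real.Gamma ((N : ℝ) - k + 1) * Real.Gamma (((N : ℝ) + k) / 2 + 1)) /
    (Real.Gamma ((N : ℝ) + 1) * Real.Gamma (((N : ℝ) - k) / 2 + 1))

/-- The average adversary success probability
`ā(N) = (2/(N(N+2)))·∑_{k=0}^{N} t_k(N)`. -/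
noncomputable def avgSuccess (N : ℕ) : ℝ :=
  2 / ((N : ℝ) * ((N : ℝ) + 2)) * ∑ k ∈ Finset.range (N + 1), gammaTerm N k

lemma gammaTerm_pos {N k : ℕ} (h : k ≤ N) : 0 < gammaTerm N k := by
  have h' : (k : ℝ) ≤ N := by exact_mod_cast h
  have hk : (0 : ℝ) ≤ k := k.cast_nonneg
  unfold gammaTerm
  have h1 := Real.Gamma_pos_of_pos (show (0 : ℝ) < (N : ℝ) - k + 1 by linarith)
  have h2 := Real.Gamma_pos_of_pos (show (0 : ℝ) < ((N : ℝ) + k) / 2 + 1 by linarith)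
  have h3 := Real.Gamma_pos_of_pos (show (0 : ℝ) < (N : ℝ) + 1 by linarith)
  have h4 := Real.Gamma_pos_of_pos (show (0 : ℝ) < ((N : ℝ) - k) / 2 + 1 by linarith)
  positivity

lemma gammaTerm_rec {N k : ℕ} (h : k + 2 ≤ N) :
    gammaTerm N (k + 2) * (4 * ((N : ℝ) - k - 1)) = gammaTerm N k * ((N : ℝ) + k + 2) := by
  have h' : (k : ℝ) + 2 ≤ N := by exact_mod_cast h
  have hk : (0 : ℝ) ≤ k := k.cast_nonneg
  unfold gammaTerm
  push_cast
  have e1 : Real.Gamma ((N : ℝ) - k + 1) =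
      ((N : ℝ) - k) * (((N : ℝ) - k - 1) * Real.Gamma ((N : ℝ) - (k + 2) + 1)) := by
    rw [Real.Gamma_add_one (by linarith)]
    congr 1
    rw [show (N : ℝ) - k = ((N : ℝ) - k - 1) + 1 by ring, Real.Gamma_add_one (by linarith)]
    ring_nf
  have e2 : Real.Gamma (((N : ℝ) + (k + 2)) / 2 + 1) =
      (((N : ℝ) + k + 2) / 2) * Real.Gamma (((N : ℝ) + k) / 2 + 1) := by
    rw [Real.Gamma_add_one (by linarith)]
    ring_nf
  have e3 : Real.Gamma (((N : ℝ) - k) / 2 + 1) =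
      (((N : ℝ) - k) / 2) * Real.Gamma (((N : ℝ) - (k + 2)) / 2 + 1) := by
    rw [Real.Gamma_add_one (by linarith)]
    ring_nf
  have h3 := Real.Gamma_pos_of_pos (show (0 : ℝ) < (N : ℝ) + 1 by linarith)
  have h4 := Real.Gamma_pos_of_pos (show (0 : ℝ) < ((N : ℝ) - (k + 2)) / 2 + 1 by linarith)
  have h5 : (0 : ℝ) < (N : ℝ) - k := by linarith
  rw [e1, e2, e3]
  generalize Real.Gamma (((N : ℝ) - (k + 2)) / 2 + 1) = A at *
  generalize Real.Gamma (((N : ℝ) + k) / 2 + 1) = B at *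
  generalize Real.Gamma ((N : ℝ) - (k + 2) + 1) = C at *
  generalize Real.Gamma ((N : ℝ) + 1) = D at *
  field_simp
  ring

lemma gammaTerm_zero (N : ℕ) : gammaTerm N 0 = 1 := by
  have h1 := Real.Gamma_pos_of_pos (show (0 : ℝ) < (N : ℝ) + 1 by positivity)
  have h2 := Real.Gamma_pos_of_pos (show (0 : ℝ) < (N : ℝ) / 2 + 1 by positivity)
  unfold gammaTerm
  simp only [Nat.cast_zero, sub_zero, add_zero]
  exact div_self (by positivity)

lemma gammaTerm_self (N : ℕ) : gammaTerm N N = 1 := by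
  have h1 := Real.Gamma_pos_of_pos (show (0 : ℝ) < (N : ℝ) + 1 by positivity)
  unfold gammaTerm
  rw [sub_self, zero_div, zero_add, Real.Gamma_one, add_self_div_two, one_mul, mul_one]
  exact div_self h1.ne'

lemma gammaTerm_one {N : ℕ} (h : 1 ≤ N) : gammaTerm N 1 = ((N : ℝ) + 1) / (2 * N) := by
  have h' : (1 : ℝ) ≤ N := by exact_mod_cast h
  unfold gammaTerm
  have e1 : Real.Gamma ((N : ℝ) + 1) = N * Real.Gamma ((N : ℝ) - (1 : ℕ) + 1) := by
    rw [Real.Gamma_add_one (by linarith)]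
    norm_num
  have e2 : Real.Gamma (((N : ℝ) + (1 : ℕ)) / 2 + 1) =
      (((N : ℝ) + 1) / 2) * Real.Gamma (((N : ℝ) - (1 : ℕ)) / 2 + 1) := by
    rw [Real.Gamma_add_one (by positivity)]
    push_cast
    ring_nf
  have h1 := Real.Gamma_pos_of_pos (show (0 : ℝ) < (N : ℝ) - (1 : ℕ) + 1 by
    push_cast; linarith)
  have h2 := Real.Gamma_pos_of_pos (show (0 : ℝ) < ((N : ℝ) - (1 : ℕ)) / 2 + 1 by
    push_cast; linarith)
  rw [e1, e2]
  generalize Real.Gamma (((N : ℝ) - (1 : ℕ)) / 2 + 1) = A at *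
  generalize Real.Gamma ((N : ℝ) - (1 : ℕ) + 1) = B at *
  field_simp

/-- Wallis-type estimate: `t_{M}(M+1)² = O(1/M)`. It is proved by induction on `M`: the ratio of
consecutive values is `(2M+3)/(2M+4)`, and `(2M+3)(2M+5) ≤ (2M+4)²`. -/
lemma gammaTerm_top_one (M : ℕ) : gammaTerm (M + 1) M ^ 2 * (2 * (M : ℝ) + 3) ≤ 4 := by
  induction M with
  | zero =>
    rw [gammaTerm_zero]
    norm_num
  | succ M ih =>
    have hM : (0 : ℝ) ≤ M := M.cast_nonneg
    have e : gammaTerm (M + 1 + 1) (M + 1) =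
        gammaTerm (M + 1) M * ((2 * (M : ℝ) + 3) / (2 * M + 4)) := by
      unfold gammaTerm
      push_cast
      have e1 : Real.Gamma (((M : ℝ) + 1 + 1 + (M + 1)) / 2 + 1) =
          ((2 * (M : ℝ) + 3) / 2) * Real.Gamma (((M : ℝ) + 1 + M) / 2 + 1) := by
        rw [Real.Gamma_add_one (by positivity)]
        ring_nf
      have e2 : Real.Gamma ((M : ℝ) + 1 + 1 + 1) =
          ((M : ℝ) + 2) * Real.Gamma ((M : ℝ) + 1 + 1) := by
        rw [Real.Gamma_add_one (by positivity)]
        ring_nf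
      have h1 := Real.Gamma_pos_of_pos (show (0 : ℝ) < (M : ℝ) + 1 + 1 by positivity)
      rw [e1, e2, show (M : ℝ) + 1 + 1 - (M + 1) = (M : ℝ) + 1 - M by ring]
      have h2 := Real.Gamma_pos_of_pos (show (0 : ℝ) < ((M : ℝ) + 1 - M) / 2 + 1 by
        norm_num)
      generalize Real.Gamma (((M : ℝ) + 1 - M) / 2 + 1) = A at *
      generalize Real.Gamma ((M : ℝ) + 1 + 1) = B at *
      field_simp
      ring
    have hw : ((2 * (M : ℝ) + 3) / (2 * M + 4)) ^ 2 * (2 * ((M : ℝ) + 1) + 3) ≤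
        2 * (M : ℝ) + 3 := by
      rw [div_pow, div_mul_eq_mul_div, div_le_iff₀ (by positivity)]
      nlinarith [mul_nonneg hM hM]
    rw [e, mul_pow, mul_assoc]
    push_cast
    exact (mul_le_mul_of_nonneg_left hw (sq_nonneg _)).trans ih

/-- Geometric decay in the lower range. The ratio `t_{k+2}/t_k` is at most `3/4 ≤ (24/25)^6` when
`4k + 5 ≤ 2N`; otherwise `3k ≥ N`, the exponent is constant, and the ratio is at most `1`. -/
lemma gammaTerm_low {N : ℕ} (hN : 10 ≤ N) (k : ℕ) :
    5 * k ≤ 3 * N + 4 → k ≤ N → gammaTerm N k ≤ 2 * (24 / 25 : ℝ) ^ (min (3 * k) N) := by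
  induction k using Nat.twoStepInduction with
  | zero =>
    intro _ _
    rw [gammaTerm_zero]
    norm_num
  | one =>
    intro _ _
    have h' : (10 : ℝ) ≤ N := by exact_mod_cast hN
    rw [gammaTerm_one (by omega), show min (3 * 1) N = 3 by omega,
      div_le_iff₀ (by positivity)]
    nlinarith
  | more k ih _ =>
    intro h1 h2
    have ih := ih (by omega) (by omega)
    have hrec := gammaTerm_rec h2
    have h2' : (k : ℝ) + 2 ≤ N := by exact_mod_cast h2
    have hp := gammaTerm_pos (show k ≤ N by omega)
    have hd : (0 : ℝ) < 4 * ((N : ℝ) - k - 1) := by linarith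
    by_cases hc : 4 * k + 5 ≤ 2 * N
    · have hc' : 4 * (k : ℝ) + 5 ≤ 2 * N := by exact_mod_cast hc
      have hr : gammaTerm N (k + 2) ≤ 3 / 4 * gammaTerm N k := by
        refine le_of_mul_le_mul_right ?_ hd
        rw [hrec]
        nlinarith
      have hpow : (24 / 25 : ℝ) ^ (min (3 * k) N + 6) ≤ (24 / 25 : ℝ) ^ (min (3 * (k + 2)) N) :=
        pow_le_pow_of_le_one (by norm_num) (by norm_num) (by omega)
      rw [pow_add] at hpow
      have hq : (0 : ℝ) < (24 / 25 : ℝ) ^ (min (3 * k) N) := by positivity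
      nlinarith
    · have h1' : 5 * ((k : ℝ) + 2) ≤ 3 * N + 4 := by exact_mod_cast h1
      have hr : gammaTerm N (k + 2) ≤ gammaTerm N k := by
        refine le_of_mul_le_mul_right ?_ hd
        rw [hrec]
        nlinarith
      rw [show min (3 * (k + 2)) N = min (3 * k) N by omega]
      exact hr.trans ih

/-- The recurrence indexed from the top, by `j = N - k`. -/
lemma gammaTerm_rec_top {N j : ℕ} (h : j + 2 ≤ N) :
    gammaTerm N (N - (j + 2)) * (2 * (N : ℝ) - j) = gammaTerm N (N - j) * (4 * ((j : ℝ) + 1)) := by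
  obtain ⟨k, rfl⟩ := Nat.exists_eq_add_of_le h
  have := gammaTerm_rec (N := j + 2 + k) (k := k) (by omega)
  rw [show j + 2 + k - (j + 2) = k by omega, show j + 2 + k - j = k + 2 by omega]
  push_cast at this ⊢
  ring_nf at this ⊢
  linarith

lemma gammaTerm_top_one_sq {N : ℕ} (hN : 1 ≤ N) :
    gammaTerm N (N - 1) ^ 2 ≤ 4 / (2 * (N : ℝ) + 1) := by
  obtain ⟨M, rfl⟩ := Nat.exists_eq_add_of_le' hN
  rw [le_div_iff₀ (by positivity)]
  have := gammaTerm_top_one M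
  push_cast
  rw [show 2 * ((M : ℝ) + 1) + 1 = 2 * M + 3 by ring]
  exact this

lemma gammaTerm_top_one_le {N : ℕ} (hN : 1 ≤ N) : gammaTerm N (N - 1) ≤ 2 := by
  have h := gammaTerm_top_one_sq hN
  have h1 : 4 / (2 * (N : ℝ) + 1) ≤ 2 ^ 2 := by
    rw [div_le_iff₀ (by positivity)]
    have : (0 : ℝ) ≤ N := N.cast_nonneg
    linarith
  exact le_of_sq_le_sq (h.trans h1) (by norm_num)

lemma gammaTerm_top_two {N : ℕ} (hN : 2 ≤ N) : gammaTerm N (N - 2) = 2 / (N : ℝ) := by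
  have h := gammaTerm_rec_top (N := N) (j := 0) hN
  have h' : (2 : ℝ) ≤ N := by exact_mod_cast hN
  rw [Nat.sub_zero, gammaTerm_self] at h
  rw [eq_div_iff (by positivity)]
  norm_num at h
  linarith

lemma gammaTerm_top_three {N : ℕ} (hN : 3 ≤ N) : gammaTerm N (N - 3) ≤ 16 / (2 * (N : ℝ) - 1) := by
  have h := gammaTerm_rec_top (N := N) (j := 1) hN
  have h' : (3 : ℝ) ≤ N := by exact_mod_cast hN
  have h1 := gammaTerm_top_one_le (N := N) (by omega)
  rw [le_div_iff₀ (by linarith)]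
  norm_num at h
  linarith

/-- In the upper range `t_{N-j}` decreases in steps of two in `j`, starting from
`t_{N-4} = 12/(N(N-1))` and `t_{N-5} ≤ 256/((2N-1)(2N-3))`. -/
lemma gammaTerm_high {N : ℕ} (hN : 10 ≤ N) (i : ℕ) :
    5 * (i + 4) ≤ 2 * N + 6 → gammaTerm N (N - (i + 4)) ≤ 200 / (N : ℝ) ^ 2 := by
  have h' : (10 : ℝ) ≤ N := by exact_mod_cast hN
  induction i using Nat.twoStepInduction with
  | zero =>
    intro _
    have h := gammaTerm_rec_top (N := N) (j := 2) (by omega)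
    rw [gammaTerm_top_two (by omega)] at h
    have hd : (0 : ℝ) < 2 * (N : ℝ) - 2 := by linarith
    rw [show 0 + 4 = 2 + 2 by rfl]
    refine le_of_mul_le_mul_right ?_ hd
    push_cast at h
    rw [h, div_mul_eq_mul_div, div_mul_eq_mul_div, div_le_div_iff₀ (by positivity) (by positivity)]
    nlinarith [mul_pos (show (0 : ℝ) < N by linarith) (show (0 : ℝ) < N by linarith)]
  | one =>
    intro _
    have h := gammaTerm_rec_top (N := N) (j := 3) (by omega)
    have h3 := gammaTerm_top_three (N := N) (by omega)
    have hd : (0 : ℝ) < 2 * (N : ℝ) - 3 := by linarith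
    have hd' : (0 : ℝ) < 2 * (N : ℝ) - 1 := by linarith
    rw [show 1 + 4 = 3 + 2 by rfl]
    refine le_of_mul_le_mul_right ?_ hd
    push_cast at h
    rw [h]
    refine (mul_le_mul_of_nonneg_right h3 (by norm_num)).trans ?_
    rw [div_mul_eq_mul_div, div_mul_eq_mul_div, div_le_div_iff₀ (by positivity) (by positivity)]
    nlinarith
  | more i ih _ =>
    intro hi
    have ih := ih (by omega)
    have h := gammaTerm_rec_top (N := N) (j := i + 4) (by omega)
    have hp := gammaTerm_pos (show N - (i + 4) ≤ N by omega)
    have hi' : 5 * ((i : ℝ) + 2 + 4) ≤ 2 * N + 6 := by exact_mod_cast hi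
    have hd : (0 : ℝ) < 2 * (N : ℝ) - ((i + 4 : ℕ) : ℝ) := by push_cast; linarith
    refine le_trans ?_ ih
    rw [show i + 2 + 4 = i + 4 + 2 by ring]
    refine le_of_mul_le_mul_right ?_ hd
    rw [h]
    push_cast
    nlinarith

lemma gammaTerm_le_bound {N k : ℕ} (hN : 10 ≤ N) (hk : k + 4 ≤ N) :
    gammaTerm N k ≤ 2 * (24 / 25 : ℝ) ^ k + 200 * (1 / ((k + 1 : ℕ) : ℝ) ^ 2) := by
  by_cases hc : 5 * k ≤ 3 * N + 4
  · have h1 := gammaTerm_low hN k hc (by omega)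
    have h2 : (24 / 25 : ℝ) ^ (min (3 * k) N) ≤ (24 / 25 : ℝ) ^ k :=
      pow_le_pow_of_le_one (by norm_num) (by norm_num) (by omega)
    have h3 : (0 : ℝ) ≤ 200 * (1 / ((k + 1 : ℕ) : ℝ) ^ 2) := by positivity
    linarith
  · have h1 := gammaTerm_high hN (N - k - 4) (by omega)
    rw [show N - (N - k - 4 + 4) = k by omega] at h1
    have h2 : 200 / (N : ℝ) ^ 2 ≤ 200 * (1 / ((k + 1 : ℕ) : ℝ) ^ 2) := by
      rw [mul_one_div]
      have : ((k + 1 : ℕ) : ℝ) ≤ N := by exact_mod_cast (by omega : k + 1 ≤ N)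
      gcongr
    have h3 : (0 : ℝ) ≤ 2 * (24 / 25 : ℝ) ^ k := by positivity
    linarith

lemma gammaTerm_tendsto (k : ℕ) :
    Tendsto (fun N : ℕ => gammaTerm N k) atTop (nhds ((1 / 2 : ℝ) ^ k)) := by
  have hinv : Tendsto (fun N : ℕ => 1 / (N : ℝ)) atTop (nhds 0) :=
    tendsto_one_div_atTop_nhds_zero_nat
  induction k using Nat.twoStepInduction with
  | zero => simp [gammaTerm_zero]
  | one =>
    have h : Tendsto (fun N : ℕ => 1 / 2 + 1 / 2 * (1 / (N : ℝ))) atTop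
        (nhds (1 / 2 + 1 / 2 * 0)) := (hinv.const_mul _).const_add _
    rw [show (1 / 2 + 1 / 2 * 0 : ℝ) = (1 / 2) ^ 1 by norm_num] at h
    refine h.congr' ?_
    filter_upwards [eventually_ge_atTop 1] with N hN
    have h' : (1 : ℝ) ≤ N := by exact_mod_cast hN
    rw [gammaTerm_one hN]
    field_simp
  | more k ih _ =>
    have h : Tendsto (fun N : ℕ => gammaTerm N k *
        ((1 + ((k : ℝ) + 2) * (1 / (N : ℝ))) / (4 * (1 - ((k : ℝ) + 1) * (1 / (N : ℝ)))))) atTop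
        (nhds ((1 / 2) ^ k * ((1 + ((k : ℝ) + 2) * 0) / (4 * (1 - ((k : ℝ) + 1) * 0))))) :=
      ih.mul (((hinv.const_mul _).const_add _).div
        (((hinv.const_mul _).const_sub _).const_mul _) (by norm_num))
    rw [show (1 / 2 : ℝ) ^ k * ((1 + ((k : ℝ) + 2) * 0) / (4 * (1 - ((k : ℝ) + 1) * 0)))
      = (1 / 2) ^ (k + 2) by rw [pow_add]; norm_num] at h
    refine h.congr' ?_
    filter_upwards [eventually_ge_atTop (k + 2)] with N hN
    have h' : (k : ℝ) + 2 ≤ N := by exact_mod_cast hN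
    have hk : (0 : ℝ) ≤ k := k.cast_nonneg
    have hN0 : (0 : ℝ) < N := by linarith
    have hd : (0 : ℝ) < (N : ℝ) - k - 1 := by linarith
    have e : (1 + ((k : ℝ) + 2) * (1 / (N : ℝ))) / (4 * (1 - ((k : ℝ) + 1) * (1 / (N : ℝ))))
        = ((N : ℝ) + k + 2) / (4 * ((N : ℝ) - k - 1)) := by
      have e1 : 1 + ((k : ℝ) + 2) * (1 / (N : ℝ)) = ((N : ℝ) + k + 2) / N := by
        field_simp
        ring
      have e2 : 4 * (1 - ((k : ℝ) + 1) * (1 / (N : ℝ))) = (4 * ((N : ℝ) - k - 1)) / N := by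
        field_simp
        ring
      rw [e1, e2, div_div_div_cancel_right₀ hN0.ne']
    rw [e, ← mul_div_assoc, ← gammaTerm_rec hN, mul_div_cancel_right₀ _ (by positivity)]

/-- Tannery's theorem for the terms with `k ≤ N - 4`. -/
lemma sum_low_tendsto :
    Tendsto (fun N : ℕ => ∑ k ∈ Finset.range (N - 3), gammaTerm N k) atTop (nhds 2) := by
  have hs : Summable (fun k : ℕ =>
      2 * (24 / 25 : ℝ) ^ k + 200 * (1 / ((k + 1 : ℕ) : ℝ) ^ 2)) := by
    refine Summable.add ?_ ?_
    · exact (summable_geometric_of_lt_one (by norm_num) (by norm_num)).mul_left _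
    · exact ((summable_nat_add_iff (f := fun k : ℕ => 1 / (k : ℝ) ^ 2) 1).2
        (Real.summable_one_div_nat_pow.2 one_lt_two)).mul_left _
  have h := tendsto_tsum_of_dominated_convergence (𝓕 := (atTop : Filter ℕ))
    (f := fun N k => if k ∈ Finset.range (N - 3) then gammaTerm N k else 0)
    (g := fun k => (1 / 2 : ℝ) ^ k) hs ?_ ?_
  · rw [tsum_geometric_two] at h
    refine h.congr fun N => ?_
    rw [tsum_eq_sum (s := Finset.range (N - 3)) (fun k hk => if_neg hk)]
    exact Finset.sum_congr rfl fun k hk => if_pos hk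
  · intro k
    refine (gammaTerm_tendsto k).congr' ?_
    filter_upwards [eventually_ge_atTop (k + 4)] with N hN
    rw [if_pos (Finset.mem_range.2 (by omega))]
  · filter_upwards [eventually_ge_atTop 10] with N hN k
    split_ifs with hk
    · have hk := Finset.mem_range.1 hk
      rw [Real.norm_of_nonneg (gammaTerm_pos (by omega)).le]
      exact gammaTerm_le_bound hN (by omega)
    · rw [norm_zero]
      positivity

lemma top_one_tendsto : Tendsto (fun N : ℕ => gammaTerm N (N - 1)) atTop (nhds 0) := by
  have h1 : Tendsto (fun N : ℕ => 4 / (2 * (N : ℝ) + 1)) atTop (nhds 0) :=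
    Tendsto.const_div_atTop (tendsto_atTop_add_const_right _ _
      (tendsto_natCast_atTop_atTop.const_mul_atTop (by norm_num))) _
  have h2 := (Real.continuous_sqrt.tendsto 0).comp h1
  rw [Real.sqrt_zero] at h2
  refine squeeze_zero' (Eventually.of_forall fun N => (gammaTerm_pos (by omega)).le) ?_ h2
  filter_upwards [eventually_ge_atTop 1] with N hN
  exact Real.le_sqrt_of_sq_le (gammaTerm_top_one_sq hN)

lemma top_two_tendsto : Tendsto (fun N : ℕ => gammaTerm N (N - 2)) atTop (nhds 0) := by
  refine (tendsto_const_div_atTop_nhds_zero_nat 2).congr' ?_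
  filter_upwards [eventually_ge_atTop 2] with N hN
  rw [gammaTerm_top_two hN]

lemma top_three_tendsto : Tendsto (fun N : ℕ => gammaTerm N (N - 3)) atTop (nhds 0) := by
  have h1 : Tendsto (fun N : ℕ => 16 / (2 * (N : ℝ) - 1)) atTop (nhds 0) :=
    Tendsto.const_div_atTop (tendsto_atTop_add_const_right _ (-1)
      (tendsto_natCast_atTop_atTop.const_mul_atTop (by norm_num))) _
  refine squeeze_zero' (Eventually.of_forall fun N => (gammaTerm_pos (by omega)).le) ?_ h1
  filter_upwards [eventually_ge_atTop 3] with N hN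
  exact gammaTerm_top_three hN

lemma sum_tendsto :
    Tendsto (fun N : ℕ => ∑ k ∈ Finset.range (N + 1), gammaTerm N k) atTop (nhds 3) := by
  have h := (((sum_low_tendsto.add top_three_tendsto).add top_two_tendsto).add
    top_one_tendsto).add (tendsto_const_nhds (x := (1 : ℝ)))
  rw [show (2 + 0 + 0 + 0 + 1 : ℝ) = 3 by norm_num] at h
  refine h.congr' ?_
  filter_upwards [eventually_ge_atTop 3] with N hN
  obtain ⟨M, rfl⟩ := Nat.exists_eq_add_of_le' hN
  rw [Finset.sum_range_succ, Finset.sum_range_succ, Finset.sum_range_succ, Finset.sum_range_succ,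
    gammaTerm_self]
  rfl

/-- `lim_{N→∞} N²·ā(N) = 6`; in particular `ā(N) = O(1/N²)`. -/
theorem avgSuccess_asymptotics :
    Tendsto (fun N : ℕ => (N : ℝ) ^ 2 * avgSuccess N) atTop (nhds 6) ∧
    (fun N : ℕ => avgSuccess N) =O[atTop] (fun N : ℕ => 1 / (N : ℝ) ^ 2) := by
  have hlim : Tendsto (fun N : ℕ => (N : ℝ) ^ 2 * avgSuccess N) atTop (nhds 6) := by
    have h1 : Tendsto (fun N : ℕ => 2 - 4 / ((N : ℝ) + 2)) atTop (nhds (2 - 0)) :=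
      (Tendsto.const_div_atTop (tendsto_atTop_add_const_right _ _
        tendsto_natCast_atTop_atTop) _).const_sub _
    have h2 := h1.mul sum_tendsto
    rw [show ((2 - 0) * 3 : ℝ) = 6 by norm_num] at h2
    refine h2.congr' ?_
    filter_upwards [eventually_ge_atTop 1] with N hN
    have h' : (1 : ℝ) ≤ N := by exact_mod_cast hN
    unfold avgSuccess
    rw [← mul_assoc]
    congr 1
    field_simp
    ring
  refine ⟨hlim, ?_⟩
  have h := (hlim.isBigO_one ℝ).mul
    (Asymptotics.isBigO_refl (fun N : ℕ => 1 / (N : ℝ) ^ 2) atTop)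
  refine h.congr' ?_ (Eventually.of_forall fun N => one_mul _)
  filter_upwards [eventually_ge_atTop 1] with N hN
  have h' : (1 : ℝ) ≤ N := by exact_mod_cast hN
  field_simp
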